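/- If (T,Y) is relatively hypercyclic then (T,Y) is topologically transitive: for nonempty relatively open subsets U, V of Y there exists n ≥ 0 with T^n(U) ∩ V ≠ ∅. -/

import Mathlib

open Set Filter Topology

variable {X : Type*} [NormedAddCommGroup X] [NormedSpace ℝ X] [CompleteSpace X]

/-- The natural domain of the n-th power of an operator `T` with domain `D`:
`D(T^0) = X`, `D(T^{n+1}) = {x ∈ D(T^n) : T^n x ∈ D}`. -/
def pdom (D : Submodule ℝ X) (T : X →ₗ[ℝ] X) : ℕ → Set X
  | 0 => Set.univ
  | n + 1 => {x | x ∈ pdom D T n ∧ (⇑T)^[n] x ∈ (D : Set X)}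

/-- `Y0 = ⋂_{n ≥ 1} D(T^n)`, the maximal dynamical domain. -/
def Y0 (D : Submodule ℝ X) (T : X →ₗ[ℝ] X) : Set X := ⋂ n : ℕ, pdom D T (n + 1)

/-- The orbit of `x` under `T`. -/
def orb (T : X →ₗ[ℝ] X) (x : X) : Set X := Set.range fun n : ℕ => (⇑T)^[n] x

/-- The set of hypercyclic vectors of `T`. -/
def HCset (D : Submodule ℝ X) (T : X →ₗ[ℝ] X) : Set X :=
  {x | x ∈ Y0 D T ∧ Dense (orb T x)}

/-- The set of relatively hypercyclic vectors of `(T, Y)`. -/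
def RHCset (D : Submodule ℝ X) (T : X →ₗ[ℝ] X) (Y : Set X) : Set X :=
  {x | x ∈ Y0 D T ∧ x ≠ 0 ∧ Y ⊆ closure (orb T x ∩ Y)}

/-- `(T, Y)` is topologically transitive (w.r.t. the subspace topology on `Y`). -/
def TT (T : X →ₗ[ℝ] X) (Y : Set X) : Prop :=
  ∀ G H : Set X, IsOpen G → IsOpen H → (G ∩ Y).Nonempty → (H ∩ Y).Nonempty →
    ∃ n : ℕ, ((⇑T)^[n] '' (G ∩ Y) ∩ (H ∩ Y)).Nonempty

/-- `(T, Y)` is mixing. -/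
def Mixing (T : X →ₗ[ℝ] X) (Y : Set X) : Prop :=
  ∀ G H : Set X, IsOpen G → IsOpen H → (G ∩ Y).Nonempty → (H ∩ Y).Nonempty →
    ∃ N : ℕ, ∀ n ≥ N, ((⇑T)^[n] '' (G ∩ Y) ∩ (H ∩ Y)).Nonempty

/-- `(T, Y)` is strongly topologically transitive. -/
def STT (T : X →ₗ[ℝ] X) (Y : Set X) : Prop :=
  ∀ G : Set X, IsOpen G → (G ∩ Y).Nonempty →
    Y \ {0} ⊆ ⋃ n : ℕ, (⇑T)^[n] '' (G ∩ Y)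

/-- `(T, Y)` is hypermixing. -/
def HM (T : X →ₗ[ℝ] X) (Y : Set X) : Prop :=
  ∀ G : Set X, IsOpen G → (G ∩ Y).Nonempty →
    Y \ {0} ⊆ ⋃ i : ℕ, ⋂ n : ℕ, ⋂ (_ : i ≤ n), (⇑T)^[n] '' (G ∩ Y)

/-- `(T, Y)` is supermixing. -/
def SM (T : X →ₗ[ℝ] X) (Y : Set X) : Prop :=
  ∀ G : Set X, IsOpen G → (G ∩ Y).Nonempty →
    Y ⊆ closure ((⋃ i : ℕ, ⋂ n : ℕ, ⋂ (_ : i ≤ n), (⇑T)^[n] '' (G ∩ Y)) ∩ Y)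

/-- The generalized kernel `GK(T) = ⋃_{n ≥ 1} Ker T^n`. -/
def GK (D : Submodule ℝ X) (T : X →ₗ[ℝ] X) : Set X :=
  ⋃ n : ℕ, {x | x ∈ pdom D T (n + 1) ∧ (⇑T)^[n + 1] x = 0}

/-- `RHC ⇒ TT`: relative hypercyclicity of `(T, Y)` implies topological
transitivity of `(T, Y)`. -/
theorem stmt7 [TopologicalSpace.SeparableSpace X] (hinf : ¬ FiniteDimensional ℝ X)
    (D : Submodule ℝ X) (T : X →ₗ[ℝ] X) (Y : Submodule ℝ X)
    (hY : (Y : Set X) ⊆ Y0 D T)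
    (hrhc : (RHCset D T (Y : Set X)).Nonempty) :
    TT T (Y : Set X) := by
  obtain ⟨x, -, -, hx⟩ := hrhc
  intro G H hG hH hGY hHY
  by_cases hb : ∃ v ∈ Y, v ≠ 0
  · obtain ⟨v, hvY, hv⟩ := hb
    obtain ⟨g, hgG, hgY⟩ := hGY
    obtain ⟨_, h1, ⟨n, rfl⟩, h2⟩ := mem_closure_iff.1 (hx hgY) G hG hgG
    obtain ⟨y, hyH, hyY⟩ := hHY
    have hF : ((fun i : ℕ => (⇑T)^[i] x) '' Set.Iio n).Finite := (Set.finite_Iio n).image _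
    have hc : Continuous fun t : ℝ => y + t • v := by fun_prop
    have hinj : Function.Injective fun t : ℝ => y + t • v := by
      intro a b hab
      exact smul_left_injective ℝ hv (add_left_cancel hab)
    have hinfi : ((fun t : ℝ => y + t • v) ⁻¹' H).Infinite :=
      infinite_of_mem_nhds (0 : ℝ) ((hH.preimage hc).mem_nhds (by simpa using hyH))
    obtain ⟨t, htH, htF⟩ := hinfi.exists_notMem_finite (hF.preimage hinj.injOn)
    have htY : y + t • v ∈ Y := Y.add_mem hyY (Y.smul_mem t hvY)
    obtain ⟨_, ⟨h3, h4⟩, ⟨m, rfl⟩, h5⟩ := mem_closure_iff.1 (hx htY)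
      (H \ ((fun i : ℕ => (⇑T)^[i] x) '' Set.Iio n)) (hH.sdiff hF.isClosed) ⟨htH, htF⟩
    have hnm : n ≤ m := by
      by_contra hlt
      exact h4 ⟨m, not_le.1 hlt, rfl⟩
    refine ⟨m - n, (⇑T)^[m] x, ⟨(⇑T)^[n] x, ⟨h1, h2⟩, ?_⟩, h3, h5⟩
    rw [← Function.iterate_add_apply, Nat.sub_add_cancel hnm]
  · push Not at hb
    obtain ⟨g, hgG, hgY⟩ := hGY
    obtain ⟨y, hyH, hyY⟩ := hHY
    refine ⟨0, g, ⟨g, ⟨hgG, hgY⟩, rfl⟩, ?_, hgY⟩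
    rw [hb g hgY, ← hb y hyY]
    exact hyH
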